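/- With y₁(a,b;c;z) = (Γ(a)Γ(b)/Γ(c)) ₂F₁(a,b;c;z) and y₂(a,b;c;z) = z^{1−c}(Γ(a−c+1)Γ(b−c+1)/Γ(2−c)) ₂F₁(a−c+1,b−c+1;2−c;z), the 'discrete Wronskian' ω(a,b;c;z) := y₁(a,b;c;z)·y₂(a+1,b;c+1;z) − y₁(a+1,b;c+1;z)·y₂(a,b;c;z) equals −(π sin(πc)/(sin(π(c−a)) sin(π(c−b)))) · (Γ(a)Γ(b)/(Γ(c−a)Γ(c−b+1))) · z^{−c}(1−z)^{c−a−b}, for 0 < z < 1 and generic parameters. -/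

import Mathlib

/-- Gauss hypergeometric series. -/
noncomputable def hypF (a b c z : ℂ) : ℂ :=
  ∑' k : ℕ, ((ascPochhammer ℂ k).eval a * (ascPochhammer ℂ k).eval b /
    ((ascPochhammer ℂ k).eval c * (Nat.factorial k : ℂ))) * z ^ k

/-- First rescaled Frobenius solution at 0. -/
noncomputable def y₁ (a b c z : ℂ) : ℂ :=
  Complex.Gamma a * Complex.Gamma b / Complex.Gamma c * hypF a b c z

/-- Second rescaled Frobenius solution at 0. -/
noncomputable def y₂ (a b c z : ℂ) : ℂ :=
  z ^ (1 - c) * (Complex.Gamma (a - c + 1) * Complex.Gamma (b - c + 1) /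
    Complex.Gamma (2 - c)) * hypF (a - c + 1) (b - c + 1) (2 - c) z

/-- Coefficients of the Gauss series. -/
noncomputable def hypU (a b c : ℂ) (k : ℕ) : ℂ :=
  (ascPochhammer ℂ k).eval a * (ascPochhammer ℂ k).eval b /
    ((ascPochhammer ℂ k).eval c * (Nat.factorial k : ℂ))

/-- Termwise derivative of the Gauss series. -/
noncomputable def hypD (a b c z : ℂ) : ℂ :=
  ∑' k : ℕ, ((k : ℂ) + 1) * hypU a b c (k + 1) * z ^ k

lemma hypF_eq (a b c z : ℂ) : hypF a b c z = ∑' k : ℕ, hypU a b c k * z ^ k := rfl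

lemma poch_ne (c : ℂ) (hc : ∀ k : ℕ, c + k ≠ 0) (k : ℕ) : (ascPochhammer ℂ k).eval c ≠ 0 := by
  induction k with
  | zero => simp
  | succ k ih => rw [ascPochhammer_succ_eval]; exact mul_ne_zero ih (hc k)

lemma poch_left (c : ℂ) (k : ℕ) :
    (ascPochhammer ℂ k).eval c * (c + k) = c * (ascPochhammer ℂ k).eval (c + 1) := by
  rw [← ascPochhammer_succ_eval, ascPochhammer_succ_left]
  simp

lemma hypU_succ (a b c : ℂ) (hc : ∀ k : ℕ, c + k ≠ 0) (k : ℕ) :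
    ((k : ℂ) + 1) * hypU a b c (k + 1) = hypU a b c k * ((a + k) * (b + k) / (c + k)) := by
  have h1 := poch_ne c hc k
  have h2 := hc k
  have h3 : (k : ℂ) + 1 ≠ 0 := Nat.cast_add_one_ne_zero k
  have h4 : (Nat.factorial k : ℂ) ≠ 0 := by exact_mod_cast Nat.factorial_ne_zero k
  simp only [hypU, ascPochhammer_succ_eval, Nat.factorial_succ, Nat.cast_mul, Nat.cast_succ]
  field_simp

open Filter Topology in
lemma summable_D (a b c : ℂ) (hc : ∀ k : ℕ, c + k ≠ 0) (x : ℂ) (hx : ‖x‖ < 1) :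
    Summable (fun k : ℕ => ((k : ℂ) + 1) * hypU a b c (k + 1) * x ^ k) := by
  obtain ⟨r, hr, hr1⟩ := exists_between hx
  refine summable_of_ratio_norm_eventually_le hr1 ?_
  have e : ∀ k : ℕ, ((k + 1 : ℕ) + 1 : ℂ) * hypU a b c (k + 1 + 1) * x ^ (k + 1) =
      (((a + 1 + 1 * k) / (c + 1 + 1 * k)) * ((b + 1 + 1 * k) / (1 + 1 * k)) * x) *
        (((k : ℂ) + 1) * hypU a b c (k + 1) * x ^ k) := by
    intro k
    rw [hypU_succ a b c hc (k + 1)]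
    have h2 := hc (k + 1)
    have h3 : (k : ℂ) + 1 ≠ 0 := Nat.cast_add_one_ne_zero k
    have h4 : (1 : ℂ) + 1 * k ≠ 0 := by rw [one_mul, add_comm]; exact h3
    have h5 : c + 1 + 1 * k ≠ 0 := by
      intro h; apply h2; push_cast; linear_combination h
    push_cast at h2 ⊢
    have h6 : c + (k + 1) = c + 1 + 1 * (k : ℂ) := by ring
    have h7 : (k : ℂ) + 1 = 1 + 1 * (k : ℂ) := by ring
    rw [h6, h7]
    generalize hn : (1 : ℂ) + 1 * (k : ℂ) = n at *
    generalize hm : c + 1 + 1 * (k : ℂ) = m at *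
    have h8 : b + 1 + 1 * (k : ℂ) = b + n := by rw [← hn]; ring
    have h9 : a + 1 + 1 * (k : ℂ) = a + n := by rw [← hn]; ring
    rw [h8, h9]
    field_simp
    ring
  have t : Tendsto (fun k : ℕ => ‖((a + 1 + 1 * k) / (c + 1 + 1 * k)) *
      ((b + 1 + 1 * k) / (1 + 1 * k)) * x‖) atTop (𝓝 ‖x‖) := by
    have t1 := tendsto_add_mul_div_add_mul_atTop_nhds (a + 1) (c + 1) 1 (one_ne_zero (α := ℂ))
    have t2 := tendsto_add_mul_div_add_mul_atTop_nhds (b + 1) 1 1 (one_ne_zero (α := ℂ))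
    simpa using ((t1.mul t2).mul_const x).norm
  filter_upwards [t.eventually_le_const hr] with k hk
  rw [e, norm_mul]
  exact mul_le_mul_of_nonneg_right hk (norm_nonneg _)

lemma summable_kU (a b c : ℂ) (hc : ∀ k : ℕ, c + k ≠ 0) (x : ℂ) (hx : ‖x‖ < 1) :
    Summable (fun k : ℕ => (k : ℂ) * hypU a b c k * x ^ k) := by
  rw [← summable_nat_add_iff 1]
  refine ((summable_D a b c hc x hx).mul_left x).congr fun k => ?_
  push_cast
  ring

lemma tsum_kU (a b c : ℂ) (hc : ∀ k : ℕ, c + k ≠ 0) (x : ℂ) (hx : ‖x‖ < 1) :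
    ∑' k : ℕ, (k : ℂ) * hypU a b c k * x ^ k = x * hypD a b c x := by
  rw [(summable_kU a b c hc x hx).tsum_eq_zero_add, hypD, ← tsum_mul_left]
  simp only [Nat.cast_zero, zero_mul, zero_add]
  refine tsum_congr fun k => ?_
  push_cast
  ring

lemma summable_U (a b c : ℂ) (hc : ∀ k : ℕ, c + k ≠ 0) (x : ℂ) (hx : ‖x‖ < 1) :
    Summable (fun k : ℕ => hypU a b c k * x ^ k) := by
  rw [← summable_nat_add_iff 1]
  refine Summable.of_norm_bounded ((summable_D a b c hc x hx).norm) fun k => ?_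
  rw [pow_succ, norm_mul, norm_mul, norm_mul, norm_mul]
  have h1 : ‖(k : ℂ) + 1‖ = (k : ℝ) + 1 := by
    rw [← Nat.cast_succ, Complex.norm_natCast]; push_cast; rfl
  rw [h1]
  have h2 : (0 : ℝ) ≤ k := Nat.cast_nonneg k
  calc ‖hypU a b c (k + 1)‖ * (‖x ^ k‖ * ‖x‖) ≤ ‖hypU a b c (k + 1)‖ * (‖x ^ k‖ * 1) := by gcongr
    _ = 1 * ‖hypU a b c (k + 1)‖ * ‖x ^ k‖ := by ring
    _ ≤ _ := by gcongr; linarith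

lemma hasDerivAt_hypF (a b c : ℂ) (hc : ∀ k : ℕ, c + k ≠ 0) (x : ℂ) (hx : ‖x‖ < 1) :
    HasDerivAt (hypF a b c) (hypD a b c x) x := by
  obtain ⟨r, hr, hr1⟩ := exists_between hx
  have hr0 : 0 < r := lt_of_le_of_lt (norm_nonneg x) hr
  have hs := (summable_kU a b c hc (r : ℂ) (by simpa [abs_of_pos hr0] using hr1)).norm.mul_left r⁻¹
  have hd := hasDerivAt_tsum_of_isPreconnected (𝕜 := ℂ) (F := ℂ)
    (g := fun k z => hypU a b c k * z ^ k)
    (g' := fun k z => hypU a b c k * ((k : ℂ) * z ^ (k - 1))) (t := Metric.ball 0 r) (y₀ := x)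
    (y := x) hs Metric.isOpen_ball (convex_ball 0 r).isPreconnected
    (fun k y _ => (hasDerivAt_pow k y).const_mul _)
    (fun k y hy => by
      have hy' : ‖y‖ ≤ r := by simpa using (Metric.mem_ball.1 hy).le
      rcases k with _ | k
      · simp
      · simp only [norm_mul, norm_pow, Nat.add_sub_cancel, Complex.norm_real, Real.norm_eq_abs,
          abs_of_pos hr0]
        calc _ ≤ ‖hypU a b c (k + 1)‖ * (‖((k + 1 : ℕ) : ℂ)‖ * r ^ k) := by gcongr
          _ = _ := by field_simp; ring)
    (by simpa using hr) (summable_U a b c hc x hx) (by simpa using hr)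
  convert! hd using 1
  have h2 := tsum_kU a b c hc x hx
  have hsum : Summable (fun k : ℕ => hypU a b c k * ((k : ℂ) * x ^ (k - 1))) := by
    rw [← summable_nat_add_iff 1]
    refine (summable_D a b c hc x hx).congr fun k => ?_
    simp only [Nat.add_sub_cancel]; push_cast; ring
  rw [hsum.tsum_eq_zero_add, hypD]
  simp only [Nat.cast_zero, zero_mul, mul_zero, zero_add, Nat.add_sub_cancel]
  refine tsum_congr fun k => ?_
  push_cast; ring

lemma shift_ne {c : ℂ} (hc : ∀ k : ℕ, c + k ≠ 0) (k : ℕ) : c + 1 + k ≠ 0 := by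
  intro h; apply hc (k + 1); push_cast; linear_combination h

lemma hypU_shift (a b c : ℂ) (hc : ∀ k : ℕ, c + k ≠ 0) (k : ℕ) :
    a * (c + k) * hypU (a + 1) b (c + 1) k = c * (a + k) * hypU a b c k := by
  have h1 := poch_ne c hc k
  have h2 := poch_ne (c + 1) (shift_ne hc) k
  have h4 : (Nat.factorial k : ℂ) ≠ 0 := by exact_mod_cast Nat.factorial_ne_zero k
  have e1 := poch_left a k
  have e2 := poch_left c k
  simp only [hypU]
  field_simp
  linear_combination (ascPochhammer ℂ k).eval b * (-c * (ascPochhammer ℂ k).eval (c + 1) * e1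
    + a * (ascPochhammer ℂ k).eval (a + 1) * e2)

lemma rel1 (a b c : ℂ) (hc : ∀ k : ℕ, c + k ≠ 0) (x : ℂ) (hx : ‖x‖ < 1) :
    c * hypD a b c x = a * (x * hypD (a + 1) b (c + 1) x + b * hypF (a + 1) b (c + 1) x) := by
  have hc' := shift_ne hc
  rw [← tsum_kU _ _ _ hc' x hx, hypF_eq, ← tsum_mul_left (a := b),
    ← (summable_kU _ _ _ hc' x hx).tsum_add ((summable_U _ _ _ hc' x hx).mul_left b),
    ← tsum_mul_left, hypD, ← tsum_mul_left]
  refine tsum_congr fun k => ?_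
  rw [hypU_succ a b c hc k]
  have := hypU_shift a b c hc k
  have h2 := hc k
  field_simp
  linear_combination -(b + k) * x ^ k * this

lemma rel2 (a b c : ℂ) (hc : ∀ k : ℕ, c + k ≠ 0) (x : ℂ) (hx : ‖x‖ < 1) :
    a * (x * hypD (a + 1) b (c + 1) x + c * hypF (a + 1) b (c + 1) x) =
      c * (x * hypD a b c x + a * hypF a b c x) := by
  have hc' := shift_ne hc
  rw [← tsum_kU _ _ _ hc' x hx, ← tsum_kU _ _ _ hc x hx, hypF_eq, hypF_eq,
    ← tsum_mul_left (a := c), ← tsum_mul_left (a := a) (f := fun k => hypU a b c k * x ^ k),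
    ← (summable_kU _ _ _ hc' x hx).tsum_add ((summable_U _ _ _ hc' x hx).mul_left c),
    ← (summable_kU _ _ _ hc x hx).tsum_add ((summable_U _ _ _ hc x hx).mul_left a),
    ← tsum_mul_left, ← tsum_mul_left]
  refine tsum_congr fun k => ?_
  linear_combination x ^ k * hypU_shift a b c hc k

lemma hypF_zero (a b c : ℂ) : hypF a b c 0 = 1 := by
  rw [hypF_eq, tsum_eq_single 0]
  · simp [hypU]
  · intro k hk; simp [hk]

lemma hypF_symm (a b c z : ℂ) : hypF a b c z = hypF b a c z := by
  unfold hypF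
  refine tsum_congr fun k => ?_
  ring

lemma key (a b c : ℂ) (ha : a ≠ 0) (hbc : b - c ≠ 0)
    (hc : ∀ k : ℕ, c + k ≠ 0) (hC : ∀ k : ℕ, (1 - c) + k ≠ 0) (z : ℂ) (hz : ‖z‖ < 1) :
    c * (1 - c) * (hypF a b c z * hypF (b - c) (a - c + 1) (1 - c) z) -
      a * (b - c) * z * (hypF (a + 1) b (c + 1) z *
        hypF (b - c + 1) (a - c + 1) (1 - c + 1) z) = c * (1 - c) * (1 - z) ^ (c - a - b) := by
  have hc0 : c ≠ 0 := by simpa using hc 0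
  have hC0 : 1 - c ≠ 0 := by simpa using hC 0
  set W : ℂ → ℂ := fun z =>
    c * (1 - c) * (hypF a b c z * hypF (b - c) (a - c + 1) (1 - c) z) -
      a * (b - c) * z * (hypF (a + 1) b (c + 1) z *
        hypF (b - c + 1) (a - c + 1) (1 - c + 1) z) with hW
  have hslit : ∀ x : ℂ, ‖x‖ < 1 → 1 - x ∈ Complex.slitPlane := by
    intro x hx
    left
    have := (Complex.re_le_norm x).trans_lt hx
    simp; linarith
  have hd : ∀ x : ℂ, ‖x‖ < 1 →
      HasDerivAt (fun z => W z * (1 - z) ^ (a + b - c)) 0 x := by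
    intro x hx
    have hx1 : 1 - x ≠ 0 := Complex.slitPlane_ne_zero (hslit x hx)
    have d1 := hasDerivAt_hypF a b c hc x hx
    have d2 := hasDerivAt_hypF (a + 1) b (c + 1) (shift_ne hc) x hx
    have d3 := hasDerivAt_hypF (b - c) (a - c + 1) (1 - c) hC x hx
    have d4 := hasDerivAt_hypF (b - c + 1) (a - c + 1) (1 - c + 1) (shift_ne hC) x hx
    have dp := ((hasDerivAt_id x).const_sub 1).cpow_const (c := a + b - c) (hslit x hx)
    have dW := (((d1.mul d3).const_mul (c * (1 - c))).sub
      (((hasDerivAt_id x).const_mul (a * (b - c))).mul (d2.mul d4))).mul dp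
    convert! dW using 1
    have r1 := rel1 a b c hc x hx
    have r2 := rel2 a b c hc x hx
    have s1 := rel1 (b - c) (a - c + 1) (1 - c) hC x hx
    have s2 := rel2 (b - c) (a - c + 1) (1 - c) hC x hx
    simp only [id, Pi.mul_apply, Pi.sub_apply]
    rw [Complex.cpow_sub (a + b - c) 1 hx1, Complex.cpow_one]
    generalize hypF a b c x = f at *
    generalize hypD a b c x = f' at *
    generalize hypF (a + 1) b (c + 1) x = f1 at *
    generalize hypD (a + 1) b (c + 1) x = f1' at *
    generalize hypF (b - c) (a - c + 1) (1 - c) x = g1 at *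
    generalize hypD (b - c) (a - c + 1) (1 - c) x = g1' at *
    generalize hypF (b - c + 1) (a - c + 1) (1 - c + 1) x = g at *
    generalize hypD (b - c + 1) (a - c + 1) (1 - c + 1) x = g' at *
    generalize (1 - x) ^ (a + b - c) = P
    have p1 : c * ((1 - x) * f') = a * (c * f - (c - b) * f1) := by
      linear_combination r1 + r2
    have p2 : (1 - x) * (x * f1') = c * f - (c - b * x) * f1 := by
      apply mul_left_cancel₀ ha
      linear_combination p1 - (1 - x) * r1
    have q1 : (1 - c) * ((1 - x) * g1') = (b - c) * ((1 - c) * g1 + a * g) := by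
      linear_combination s1 + s2
    have q2 : (1 - x) * (x * g') = (1 - c) * g1 - (1 - c - (a - c + 1) * x) * g := by
      apply mul_left_cancel₀ hbc
      linear_combination q1 - (1 - x) * s1
    field_simp
    linear_combination (-P) * ((1 - c) * g1 * p1 + c * f * q1 - a * (b - c) * g * p2
      - a * (b - c) * f1 * q2)
  have hconst := (Metric.isOpen_ball (x := (0 : ℂ)) (ε := 1)).is_const_of_deriv_eq_zero
    (convex_ball (0 : ℂ) 1).isPreconnected
    (fun x hx => (hd x (by simpa using hx)).differentiableAt.differentiableWithinAt)
    (fun x hx => (hd x (by simpa using hx)).deriv)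
    (x := z) (y := 0) (by simpa using hz) (by simp)
  have hx1 : 1 - z ≠ 0 := Complex.slitPlane_ne_zero (hslit z hz)
  have h0 : W 0 = c * (1 - c) := by simp [hW, hypF_zero]
  simp only [h0, sub_zero, Complex.one_cpow, mul_one] at hconst
  have hpp : (1 - z) ^ (a + b - c) * (1 - z) ^ (c - a - b) = 1 := by
    rw [← Complex.cpow_add _ _ hx1, show a + b - c + (c - a - b) = 0 by ring, Complex.cpow_zero]
  change W z = _
  rw [← hconst]
  linear_combination (-W z) * hpp

theorem discrete_wronskian_formula (a b c : ℂ)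
    (hcZ : ∀ m : ℤ, c ≠ (m : ℂ))
    (ha : ∀ m : ℤ, m ≤ 0 → a ≠ (m : ℂ)) (hb : ∀ m : ℤ, m ≤ 0 → b ≠ (m : ℂ))
    (hca : ∀ m : ℤ, m ≤ 0 → c - a ≠ (m : ℂ)) (hcb : ∀ m : ℤ, m ≤ 0 → c - b ≠ (m : ℂ))
    (hcb1 : ∀ m : ℤ, m ≤ 0 → c - b + 1 ≠ (m : ℂ))
    (z : ℝ) (hz0 : 0 < z) (hz1 : z < 1) :
    y₁ a b c z * y₂ (a + 1) b (c + 1) z - y₁ (a + 1) b (c + 1) z * y₂ a b c z =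
      -((↑Real.pi * Complex.sin (Real.pi * c) /
          (Complex.sin (Real.pi * (c - a)) * Complex.sin (Real.pi * (c - b)))) *
        (Complex.Gamma a * Complex.Gamma b /
          (Complex.Gamma (c - a) * Complex.Gamma (c - b + 1))) *
        (z : ℂ) ^ (-c) * ((1 : ℂ) - z) ^ (c - a - b)) := by
  have hc : ∀ k : ℕ, c + k ≠ 0 := by
    intro k h; apply hcZ (-k); push_cast; linear_combination h
  have hC : ∀ k : ℕ, (1 - c) + k ≠ 0 := by
    intro k h; apply hcZ (k + 1); push_cast; linear_combination -h
  have ha0 : a ≠ 0 := by simpa using ha 0 le_rfl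
  have hbc : b - c ≠ 0 := by
    intro h; apply hcb 0 le_rfl; push_cast; linear_combination -h
  have hc0 : c ≠ 0 := by simpa using hc 0
  have hC0 : 1 - c ≠ 0 := by simpa using hC 0
  have hk := key a b c ha0 hbc hc hC (z : ℂ) (by simpa [abs_of_pos hz0] using hz1)
  have hz : (z : ℂ) ≠ 0 := by exact_mod_cast hz0.ne'
  have g1 := Complex.Gamma_mul_Gamma_one_sub c
  have g2 := Complex.Gamma_mul_Gamma_one_sub (c - a)
  have g3 := Complex.Gamma_mul_Gamma_one_sub (c - b)
  have gne : ∀ s : ℂ, (∀ m : ℤ, m ≤ 0 → s ≠ (m : ℂ)) → Complex.Gamma s ≠ 0 := by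
    intro s hs
    apply Complex.Gamma_ne_zero
    intro m h
    apply hs (-m) (by simp)
    push_cast; exact h
  have n1 := gne c (fun m _ => hcZ m)
  have n1' := gne (1 - c) (fun m _ h => hcZ (1 - m) (by push_cast; linear_combination -h))
  have n2 := gne (c - a) hca
  have n3 := gne (c - b) hcb
  have n4 := gne (c - b + 1) hcb1
  have hcb0 : c - b ≠ 0 := by simpa using hcb 0 le_rfl
  have e1 : (2 : ℂ) - (c + 1) = 1 - c := by ring
  have e2 : a + 1 - (c + 1) + 1 = a - c + 1 := by ring
  have e3 : b - (c + 1) + 1 = b - c := by ring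
  have e4 : (2 : ℂ) - c = 1 - c + 1 := by ring
  have e5 : (1 : ℂ) - (c + 1) = -c := by ring
  have e6 : (1 : ℂ) - (c - a) = a - c + 1 := by ring
  have e7 : (1 : ℂ) - (c - b) = b - c + 1 := by ring
  have e8 : (1 : ℂ) - c = -c + 1 := by ring
  have ez : (z : ℂ) ^ (1 - c) = (z : ℂ) ^ (-c) * z := by
    rw [e8, Complex.cpow_add _ _ hz, Complex.cpow_one]
  rw [e6] at g2
  rw [e7, Complex.Gamma_add_one _ hbc] at g3
  have hpi : (Real.pi : ℂ) ≠ 0 := by exact_mod_cast Real.pi_ne_zero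
  have hsin : Complex.sin (Real.pi * c) = Real.pi / (Complex.Gamma c * Complex.Gamma (1 - c)) := by
    rw [g1, div_div_cancel₀ hpi]
  have hfrac : (Real.pi : ℂ) * Complex.sin (Real.pi * c) /
      (Complex.sin (Real.pi * (c - a)) * Complex.sin (Real.pi * (c - b))) =
      (Complex.Gamma (c - a) * Complex.Gamma (a - c + 1)) *
      (Complex.Gamma (c - b) * ((b - c) * Complex.Gamma (b - c))) /
      (Complex.Gamma c * Complex.Gamma (1 - c)) := by
    rw [g2, g3, ← mul_div_mul_comm, hsin]
    field_simp
  rw [hfrac]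
  unfold y₁ y₂
  rw [e1, e2, e3, e5, ez, e4, Complex.Gamma_add_one _ ha0, Complex.Gamma_add_one _ hc0,
    Complex.Gamma_add_one _ hC0, Complex.Gamma_add_one _ hbc, Complex.Gamma_add_one _ hcb0,
    hypF_symm (a - c + 1) (b - c), hypF_symm (a - c + 1) (b - c + 1)]
  generalize hypF a b c z = f at *
  generalize hypF (a + 1) b (c + 1) z = f1 at *
  generalize hypF (b - c) (a - c + 1) (1 - c) z = g1 at *
  generalize hypF (b - c + 1) (a - c + 1) (1 - c + 1) z = g at *
  generalize (1 - (z : ℂ)) ^ (c - a - b) = P at *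
  generalize (z : ℂ) ^ (-c) = Q at *
  have hR : -(Complex.Gamma (c - a) * Complex.Gamma (a - c + 1) *
      (Complex.Gamma (c - b) * ((b - c) * Complex.Gamma (b - c))) /
      (Complex.Gamma c * Complex.Gamma (1 - c)) *
      (Complex.Gamma a * Complex.Gamma b /
        (Complex.Gamma (c - a) * ((c - b) * Complex.Gamma (c - b)))) * Q * P) =
      Complex.Gamma (a - c + 1) * Complex.Gamma (b - c) * Complex.Gamma a * Complex.Gamma b /
        (Complex.Gamma c * Complex.Gamma (1 - c)) * Q * P := by
    field_simp
    ring
  have hP : P = f * g1 - a * (b - c) * z * (f1 * g) / (c * (1 - c)) := by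
    field_simp
    linear_combination -hk
  rw [hR, hP]
  field_simp
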